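/- arXiv:1807.02661 — 2 statements merged into one kernel-verified Lean document; each statement's English description precedes it below -/
import Mathlib

section
/- Assume 0 < V₀ < ∞, and let λ : (0, V₀) → ℝ be the tie function assigning to each V₁ ∈ (0, V₀) the unique λ(V₁) > V₁ with μ(V₁, λ(V₁)) = 0. Then λ(V₁) → ∞ as V₁ → V₀⁻; that is, the tie function blows up to infinity at the finite blowup time. -/
open Filter Set

/-- The perimeter difference μ(V₁,V₂) between the triple interval and the double
interval, expressed via the equilibrium point Ṽ = Vt V₁ V₂. -/
noncomputable def mu (f : ℝ → ℝ) (Vt : ℝ → ℝ → ℝ) (V₁ V₂ : ℝ) : ℝ :=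
  2 * f (V₁ / 2) + 2 * f ((V₁ + V₂) / 2)
    - f (Vt V₁ V₂) - f (Vt V₁ V₂ + V₁) - f (Vt V₁ V₂ + V₁ + V₂)

/-- The set S whose supremum is the blowup time V₀. -/
noncomputable def blowupSet (f : ℝ → ℝ) (Vt : ℝ → ℝ → ℝ) : Set ℝ :=
  {W : ℝ | 0 < W ∧ ∃ V₂ : ℝ, W ≤ V₂ ∧ mu f Vt W V₂ < 0}

lemma tang (f : ℝ → ℝ) (hc : StrictConvexOn ℝ Set.univ f) (hs : ContDiff ℝ 1 f) (x y : ℝ) :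
    f x + deriv f x * (y - x) ≤ f y := by
  have hd : Differentiable ℝ f := hs.differentiable (by norm_num)
  rcases lt_trichotomy x y with h | h | h
  · have := hc.convexOn.deriv_le_slope (mem_univ x) (mem_univ y) h (hd x)
    rw [slope_def_field, le_div_iff₀ (by linarith)] at this
    linarith
  · subst h; simp
  · have := hc.convexOn.slope_le_deriv (mem_univ y) (mem_univ x) h (hd x)
    rw [slope_def_field, div_le_iff₀ (by linarith)] at this
    linarith

lemma smono (f : ℝ → ℝ) (hc : StrictConvexOn ℝ Set.univ f) (hs : ContDiff ℝ 1 f) :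
    StrictMono (deriv f) := by
  have hd : Differentiable ℝ f := hs.differentiable (by norm_num)
  exact strictMonoOn_univ.1 (hc.strictMonoOn_deriv (fun x _ => hd x))

lemma dodd (f : ℝ → ℝ) (he : ∀ x, f (-x) = f x) (x : ℝ) : deriv f (-x) = - deriv f x := by
  have h : (fun x => f (-x)) = f := funext he
  have := deriv_comp_neg f x
  rw [h] at this
  linarith

/-- The perimeter of the triple interval. -/
noncomputable def tri (f : ℝ → ℝ) (Vt : ℝ → ℝ → ℝ) (a b : ℝ) : ℝ :=
  f (Vt a b) + f (Vt a b + a) + f (Vt a b + a + b)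

lemma tri_le (f : ℝ → ℝ) (hc : StrictConvexOn ℝ Set.univ f) (hs : ContDiff ℝ 1 f)
    (Vt : ℝ → ℝ → ℝ)
    (hVt : ∀ V₁ V₂ : ℝ, 0 < V₁ → 0 < V₂ →
      deriv f (Vt V₁ V₂) + deriv f (Vt V₁ V₂ + V₁) + deriv f (Vt V₁ V₂ + V₁ + V₂) = 0)
    (a b y : ℝ) (ha : 0 < a) (hb : 0 < b) :
    tri f Vt a b ≤ f y + f (y + a) + f (y + a + b) := by
  have h := hVt a b ha hb
  have h1 := tang f hc hs (Vt a b) y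
  have h2 := tang f hc hs (Vt a b + a) (y + a)
  have h3 := tang f hc hs (Vt a b + a + b) (y + a + b)
  unfold tri
  have e : (deriv f (Vt a b) + deriv f (Vt a b + a) + deriv f (Vt a b + a + b)) * (y - Vt a b) = 0 := by
    rw [h, zero_mul]
  linarith

lemma tri_conv (f : ℝ → ℝ) (hc : StrictConvexOn ℝ Set.univ f) (hs : ContDiff ℝ 1 f)
    (Vt : ℝ → ℝ → ℝ)
    (hVt : ∀ V₁ V₂ : ℝ, 0 < V₁ → 0 < V₂ →
      deriv f (Vt V₁ V₂) + deriv f (Vt V₁ V₂ + V₁) + deriv f (Vt V₁ V₂ + V₁ + V₂) = 0)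
    (a b a' b' s t : ℝ) (ha : 0 < a) (hb : 0 < b) (ha' : 0 < a') (hb' : 0 < b')
    (hs0 : 0 ≤ s) (ht : 0 ≤ t) (hst : s + t = 1) :
    tri f Vt (s * a + t * a') (s * b + t * b') ≤ s * tri f Vt a b + t * tri f Vt a' b' := by
  have pos : ∀ u v : ℝ, 0 < u → 0 < v → 0 < s * u + t * v := by
    intro u v hu hv
    exact (convex_Ioi (0:ℝ)) (mem_Ioi.2 hu) (mem_Ioi.2 hv) hs0 ht hst
  have h := tri_le f hc hs Vt hVt _ _ (s * Vt a b + t * Vt a' b') (pos _ _ ha ha') (pos _ _ hb hb')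
  have hcc : ∀ u v : ℝ, f (s * u + t * v) ≤ s * f u + t * f v := fun u v =>
    hc.convexOn.2 (mem_univ u) (mem_univ v) hs0 ht hst
  have h1 := hcc (Vt a b) (Vt a' b')
  have h2 := hcc (Vt a b + a) (Vt a' b' + a')
  have h3 := hcc (Vt a b + a + b) (Vt a' b' + a' + b')
  rw [show s * (Vt a b + a) + t * (Vt a' b' + a') =
    s * Vt a b + t * Vt a' b' + (s * a + t * a') by ring] at h2
  rw [show s * (Vt a b + a + b) + t * (Vt a' b' + a' + b') =
    s * Vt a b + t * Vt a' b' + (s * a + t * a') + (s * b + t * b') by ring] at h3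
  have e1 : tri f Vt a b = f (Vt a b) + f (Vt a b + a) + f (Vt a b + a + b) := rfl
  have e2 : tri f Vt a' b' = f (Vt a' b') + f (Vt a' b' + a') + f (Vt a' b' + a' + b') := rfl
  rw [e1, e2]
  linarith

lemma mu_eq (f : ℝ → ℝ) (Vt : ℝ → ℝ → ℝ) (a b : ℝ) :
    mu f Vt a b = 2 * f (a / 2) + 2 * f ((a + b) / 2) - tri f Vt a b := by
  unfold mu tri; ring

lemma mu_cont1 (f : ℝ → ℝ) (hc : StrictConvexOn ℝ Set.univ f) (hs : ContDiff ℝ 1 f)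
    (Vt : ℝ → ℝ → ℝ)
    (hVt : ∀ V₁ V₂ : ℝ, 0 < V₁ → 0 < V₂ →
      deriv f (Vt V₁ V₂) + deriv f (Vt V₁ V₂ + V₁) + deriv f (Vt V₁ V₂ + V₁ + V₂) = 0)
    (b : ℝ) (hb : 0 < b) : ContinuousOn (fun a => mu f Vt a b) (Ioi 0) := by
  have hf := hs.continuous
  have hT : ConvexOn ℝ (Ioi 0) (fun a => tri f Vt a b) := by
    refine ⟨convex_Ioi 0, fun x hx y hy s t hs0 ht hst => ?_⟩
    have := tri_conv f hc hs Vt hVt x b y b s t hx hb hy hb hs0 ht hst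
    rw [← add_mul, hst, one_mul] at this
    exact this
  simp only [mu_eq]
  refine ContinuousOn.sub (Continuous.continuousOn (by fun_prop)) (hT.continuousOn isOpen_Ioi)

lemma mu_cont2 (f : ℝ → ℝ) (hc : StrictConvexOn ℝ Set.univ f) (hs : ContDiff ℝ 1 f)
    (Vt : ℝ → ℝ → ℝ)
    (hVt : ∀ V₁ V₂ : ℝ, 0 < V₁ → 0 < V₂ →
      deriv f (Vt V₁ V₂) + deriv f (Vt V₁ V₂ + V₁) + deriv f (Vt V₁ V₂ + V₁ + V₂) = 0)
    (a : ℝ) (ha : 0 < a) : ContinuousOn (fun b => mu f Vt a b) (Ioi 0) := by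
  have hf := hs.continuous
  have hT : ConvexOn ℝ (Ioi 0) (fun b => tri f Vt a b) := by
    refine ⟨convex_Ioi 0, fun x hx y hy s t hs0 ht hst => ?_⟩
    have := tri_conv f hc hs Vt hVt a x a y s t ha hx ha hy hs0 ht hst
    rw [← add_mul, hst, one_mul] at this
    exact this
  simp only [mu_eq]
  refine ContinuousOn.sub (Continuous.continuousOn (by fun_prop)) (hT.continuousOn isOpen_Ioi)

lemma mu_anti (f : ℝ → ℝ) (he : ∀ x, f (-x) = f x)
    (hc : StrictConvexOn ℝ Set.univ f) (hs : ContDiff ℝ 1 f)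
    (Vt : ℝ → ℝ → ℝ)
    (hVt : ∀ V₁ V₂ : ℝ, 0 < V₁ → 0 < V₂ →
      deriv f (Vt V₁ V₂) + deriv f (Vt V₁ V₂ + V₁) + deriv f (Vt V₁ V₂ + V₁ + V₂) = 0)
    (v a b : ℝ) (hv : 0 < v) (hva : v < a) (hab : a < b) : mu f Vt v b < mu f Vt v a := by
  have hm := smono f hc hs
  have hcont : ContinuousOn (fun b => mu f Vt v b) (Icc a b) :=
    (mu_cont2 f hc hs Vt hVt v hv).mono (fun x hx => lt_of_lt_of_le (hv.trans hva) hx.1)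
  have loc : ∀ m ∈ Icc a b, a < m → ∃ c ∈ Icc a b, mu f Vt v m < mu f Vt v c := by
    intro m hmem ham
    have hm0 : 0 < m := by linarith
    set x := Vt v m with hx
    have hsum := hVt v m hv hm0
    rw [← hx] at hsum
    have hxg : -((v + m) / 2) < x := by
      by_contra hcon
      push Not at hcon
      have h1 := hm.monotone hcon
      have h2 : deriv f (x + v) < deriv f 0 := hm (by linarith)
      have h3 : deriv f (x + v + m) ≤ deriv f ((v + m) / 2) := hm.monotone (by linarith)
      have h0 := dodd f he 0
      rw [neg_zero] at h0
      rw [dodd f he] at h1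
      linarith
    obtain ⟨c, hc1, hc2⟩ := exists_between (show max a ((v + m) / 2 - x - v) < m from
      max_lt ham (by linarith))
    have hca : a < c := lt_of_le_of_lt (le_max_left _ _) hc1
    have hcx : (v + m) / 2 - x - v < c := lt_of_le_of_lt (le_max_right _ _) hc1
    refine ⟨c, ⟨hca.le, hc2.le.trans hmem.2⟩, ?_⟩
    have hg : deriv f ((v + m) / 2) < deriv f (x + v + c) := hm (by linarith)
    have k1 := tang f hc hs (x + v + c) (x + v + m)
    have k2 := tang f hc hs ((v + m) / 2) ((v + c) / 2)
    have k3 := tri_le f hc hs Vt hVt v c x hv (by linarith)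
    rw [mu_eq, mu_eq]
    have e1 : tri f Vt v m = f x + f (x + v) + f (x + v + m) := rfl
    have k4 := mul_lt_mul_of_pos_right hg (show 0 < m - c by linarith)
    rw [e1]
    linarith
  obtain ⟨m, hmem, hmax⟩ := isCompact_Icc.exists_isMaxOn (nonempty_Icc.2 hab.le) hcont
  have hma : ∀ y ∈ Icc a b, (∀ z ∈ Icc a b, mu f Vt v z ≤ mu f Vt v y) → y = a := by
    intro y hy hz
    by_contra hne
    obtain ⟨c, hc1, hc2⟩ := loc y hy (lt_of_le_of_ne hy.1 (Ne.symm hne))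
    exact absurd (hz c hc1) (not_le.2 hc2)
  have hm1 := hma m hmem (fun z hz => hmax hz)
  subst hm1
  by_contra hcon
  push Not at hcon
  have := hma b ⟨hab.le, le_rfl⟩ (fun z hz => (hmax hz : _ ≤ _).trans hcon)
  linarith

/-- Assume 0 < V₀ < ∞ (the blowup set is nonempty and bounded above,
so V₀ = sSup of the blowup set is a positive real), and let λ : (0, V₀) → ℝ be the
tie function assigning to each V₁ ∈ (0, V₀) the unique λ(V₁) > V₁ with
μ(V₁, λ(V₁)) = 0. Then λ(V₁) → ∞ as V₁ → V₀⁻. -/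
theorem stmt_14 (f : ℝ → ℝ)
    (hf_even : ∀ x, f (-x) = f x)
    (hf_conv : StrictConvexOn ℝ Set.univ f)
    (hf_smooth : ContDiff ℝ 1 f)
    (hf_pos : ∀ x, 0 < f x)
    (Vt : ℝ → ℝ → ℝ)
    (hVt : ∀ V₁ V₂ : ℝ, 0 < V₁ → 0 < V₂ →
      deriv f (Vt V₁ V₂) + deriv f (Vt V₁ V₂ + V₁) + deriv f (Vt V₁ V₂ + V₁ + V₂) = 0)
    (hne : (blowupSet f Vt).Nonempty)
    (hbdd : BddAbove (blowupSet f Vt))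
    (lam : ℝ → ℝ)
    (hlam : ∀ V₁ ∈ Set.Ioo 0 (sSup (blowupSet f Vt)),
      V₁ < lam V₁ ∧ mu f Vt V₁ (lam V₁) = 0) :
    Tendsto lam
      (nhdsWithin (sSup (blowupSet f Vt)) (Set.Iio (sSup (blowupSet f Vt))))
      atTop := by
  set V := sSup (blowupSet f Vt) with hV
  have hV0 : 0 < V := by
    obtain ⟨w, hw⟩ := hne
    exact lt_of_lt_of_le hw.1 (le_csSup hbdd hw)
  rw [tendsto_atTop]
  intro N
  set M := max N (V + 1) with hM
  have hMV : V + 1 ≤ M := le_max_right _ _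
  by_contra hcon
  have hfr : ∃ᶠ u in nhdsWithin V (Iio V), mu f Vt u M ≤ 0 := by
    have hev : ∀ᶠ u in nhdsWithin V (Iio V), u ∈ Ioo 0 V := Ioo_mem_nhdsLT hV0
    refine ((not_eventually.1 hcon).and_eventually hev).mono ?_
    rintro u ⟨h1, h2⟩
    obtain ⟨h3, h4⟩ := hlam u h2
    have h5 : lam u < M := lt_of_lt_of_le (not_le.1 h1) (le_max_left _ _)
    have := mu_anti f hf_even hf_conv hf_smooth Vt hVt u (lam u) M h2.1 h3 h5
    linarith
  have hle : mu f Vt V M ≤ 0 := by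
    have hcn := ((mu_cont1 f hf_conv hf_smooth Vt hVt M (by linarith)).continuousAt
      (Ioi_mem_nhds hV0))
    have ht : Tendsto (fun a => mu f Vt a M) (nhdsWithin V (Iio V)) (nhds (mu f Vt V M)) :=
      hcn.tendsto.mono_left nhdsWithin_le_nhds
    by_contra hpos
    push Not at hpos
    exact hfr ((ht.eventually (lt_mem_nhds hpos)).mono fun u hu => not_le.2 hu)
  have hlt : mu f Vt V (M + 1) < 0 :=
    lt_of_lt_of_le (mu_anti f hf_even hf_conv hf_smooth Vt hVt V M (M + 1) hV0
      (by linarith) (by linarith)) hle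
  have hcn := ((mu_cont1 f hf_conv hf_smooth Vt hVt (M + 1) (by linarith)).continuousAt
      (Ioi_mem_nhds hV0))
  have hev : ∀ᶠ u in nhdsWithin V (Ioi V), mu f Vt u (M + 1) < 0 :=
    (hcn.tendsto.eventually (gt_mem_nhds hlt)).filter_mono nhdsWithin_le_nhds
  have hev2 : ∀ᶠ u in nhdsWithin V (Ioi V), u ∈ Ioo V (V + 1) := Ioo_mem_nhdsGT (by linarith)
  obtain ⟨u, hu1, hu2⟩ := (hev.and hev2).exists
  have : u ≤ V := le_csSup hbdd ⟨hV0.trans hu2.1, M + 1, by linarith [hu2.2], hu1⟩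
  linarith [hu2.1]
end

section
/- Let f(V) = √(V² + 1) − 1/2. Then f is even, positive, continuously differentiable, and strictly convex; it satisfies L = lim_{V→∞} f'(V) = 1, M = lim_{V→∞} (f(2V) − 2f(V)) = 1/2, the unique V̄ with f'(V̄) = 1/2 is V̄ = 1/√3, and 2f(0) − 2f(1/√3) + (1/√3)·1 − 1/2 = 3/2 − √3 < 0. Consequently, for this density the set {V₁ > 0 : there exists V₂ ≥ V₁ with μ(V₁, V₂) < 0} is nonempty and bounded above, i.e. the blowup time V₀ satisfies 0 < V₀ < ∞. -/
open Filter Set Real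

/-- The density f(V) = √(V² + 1) − 1/2. -/
noncomputable def fEx18 (V : ℝ) : ℝ := Real.sqrt (V ^ 2 + 1) - 1 / 2

lemma aux_deriv (x : ℝ) : HasDerivAt fEx18 (x / √(x ^ 2 + 1)) x := by
  have h1 : HasDerivAt (fun V : ℝ => V ^ 2 + 1) (2 * x) x := by
    simpa using (hasDerivAt_pow 2 x).add_const (1 : ℝ)
  have h2 := (h1.sqrt (by positivity)).sub_const (1 / 2 : ℝ)
  have h3 : x / √(x ^ 2 + 1) = 2 * x / (2 * √(x ^ 2 + 1)) := by
    rw [mul_div_mul_left _ _ two_ne_zero]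
  rw [h3]
  exact h2

lemma aux_deriv_eq : deriv fEx18 = fun x => Real.sin (Real.arctan x) := by
  funext x
  rw [(aux_deriv x).deriv, Real.sin_arctan, add_comm]

lemma aux_mono : StrictMono (deriv fEx18) := by
  rw [aux_deriv_eq]
  intro x y h
  apply Real.strictMonoOn_sin
  · exact ⟨(Real.neg_pi_div_two_lt_arctan x).le, (Real.arctan_lt_pi_div_two x).le⟩
  · exact ⟨(Real.neg_pi_div_two_lt_arctan y).le, (Real.arctan_lt_pi_div_two y).le⟩
  · exact Real.arctan_strictMono h

/-- Tangent line inequality. -/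
lemma aux_tangent (x y : ℝ) : fEx18 x + deriv fEx18 x * (y - x) ≤ fEx18 y := by
  rw [(aux_deriv x).deriv]
  unfold fEx18
  have hx : 0 < √(x ^ 2 + 1) := by positivity
  have hx2 : √(x ^ 2 + 1) ^ 2 = x ^ 2 + 1 := Real.sq_sqrt (by positivity)
  have hy : 0 < √(y ^ 2 + 1) := by positivity
  have hy2 : √(y ^ 2 + 1) ^ 2 = y ^ 2 + 1 := Real.sq_sqrt (by positivity)
  have key : 1 + x * y ≤ √(x ^ 2 + 1) * √(y ^ 2 + 1) := by
    apply le_of_sq_le_sq _ (by positivity)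
    rw [mul_pow, hx2, hy2]
    nlinarith [sq_nonneg (x - y)]
  have e : √(x ^ 2 + 1) + x / √(x ^ 2 + 1) * (y - x) = (1 + x * y) / √(x ^ 2 + 1) := by
    field_simp
    rw [hx2]; ring
  have : (1 + x * y) / √(x ^ 2 + 1) ≤ √(y ^ 2 + 1) := by
    rw [div_le_iff₀ hx]; linarith
  linarith

lemma aux_lower (x : ℝ) : x ≤ √(x ^ 2 + 1) := Real.le_sqrt_of_sq_le (by linarith)

lemma aux_upper (x : ℝ) (hx : 0 < x) : √(x ^ 2 + 1) ≤ x + 1 / (2 * x) := by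
  apply Real.sqrt_le_iff.2 ⟨by positivity, ?_⟩
  have : (x + 1 / (2 * x)) ^ 2 = x ^ 2 + 1 + (1 / (2 * x)) ^ 2 := by
    field_simp
    ring
  rw [this]
  nlinarith [sq_nonneg (1 / (2 * x))]

lemma aux_lim : Tendsto (fun x : ℝ => √(x ^ 2 + 1) - x) atTop (nhds 0) := by
  have h : Tendsto (fun x : ℝ => 1 / (2 * x)) atTop (nhds 0) := by
    have := (tendsto_id (α := ℝ) (x := atTop)).const_mul_atTop (two_pos)
    exact this.inv_tendsto_atTop.congr fun x => by simp
  apply tendsto_of_tendsto_of_tendsto_of_le_of_le' tendsto_const_nhds h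
  · exact Eventually.of_forall fun x => by have := aux_lower x; linarith
  · filter_upwards [eventually_gt_atTop 0] with x hx
    have := aux_upper x hx
    linarith

lemma aux_sqrt3 : √((1 / √3) ^ 2 + 1) = 2 / √3 := by
  have h3 : √(3 : ℝ) ^ 2 = 3 := Real.sq_sqrt (by norm_num)
  rw [show (1 / √3) ^ 2 + 1 = (2 / √(3 : ℝ)) ^ 2 by rw [div_pow, div_pow, h3]; norm_num]
  exact Real.sqrt_sq (by positivity)

lemma aux_bar : deriv fEx18 (1 / √3) = 1 / 2 := by
  rw [(aux_deriv _).deriv, aux_sqrt3]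
  have : 0 < √(3 : ℝ) := by positivity
  field_simp

lemma aux_half (x : ℝ) : - x / 2 + √3 / 2 ≤ √(x ^ 2 + 1) := by
  have h3 : √(3 : ℝ) ^ 2 = 3 := Real.sq_sqrt (by norm_num)
  apply Real.le_sqrt_of_sq_le
  nlinarith [sq_nonneg (√3 * x + 1)]

/-- Let f(V) = √(V² + 1) − 1/2. Then f is even, positive, continuously
differentiable, and strictly convex; it satisfies L = lim_{V→∞} f'(V) = 1,
M = lim_{V→∞} (f(2V) − 2f(V)) = 1/2, the unique V̄ with f'(V̄) = 1/2 is V̄ = 1/√3,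
and 2f(0) − 2f(1/√3) + (1/√3)·1 − 1/2 = 3/2 − √3 < 0. Consequently, for this
density the set {V₁ > 0 : ∃ V₂ ≥ V₁, μ(V₁, V₂) < 0} is nonempty and bounded above,
i.e. the blowup time V₀ satisfies 0 < V₀ < ∞. -/
theorem stmt_18 :
    (∀ x, fEx18 (-x) = fEx18 x) ∧
    (∀ x, 0 < fEx18 x) ∧
    ContDiff ℝ 1 fEx18 ∧
    StrictConvexOn ℝ Set.univ fEx18 ∧
    Tendsto (deriv fEx18) atTop (nhds 1) ∧
    Tendsto (fun V : ℝ => fEx18 (2 * V) - 2 * fEx18 V) atTop (nhds (1 / 2)) ∧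
    (deriv fEx18 (1 / Real.sqrt 3) = 1 / 2 ∧
      ∀ V : ℝ, deriv fEx18 V = 1 / 2 → V = 1 / Real.sqrt 3) ∧
    (2 * fEx18 0 - 2 * fEx18 (1 / Real.sqrt 3) + (1 / Real.sqrt 3) * 1 - 1 / 2
        = 3 / 2 - Real.sqrt 3 ∧
      3 / 2 - Real.sqrt 3 < 0) ∧
    (∀ Vt : ℝ → ℝ → ℝ,
      (∀ V₁ V₂ : ℝ, 0 < V₁ → 0 < V₂ →
        deriv fEx18 (Vt V₁ V₂) + deriv fEx18 (Vt V₁ V₂ + V₁)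
          + deriv fEx18 (Vt V₁ V₂ + V₁ + V₂) = 0) →
      ({V₁ : ℝ | 0 < V₁ ∧ ∃ V₂ : ℝ, V₁ ≤ V₂ ∧ mu fEx18 Vt V₁ V₂ < 0}.Nonempty ∧
        BddAbove {V₁ : ℝ | 0 < V₁ ∧ ∃ V₂ : ℝ, V₁ ≤ V₂ ∧ mu fEx18 Vt V₁ V₂ < 0})) := by
  have h3 : √(3 : ℝ) ^ 2 = 3 := Real.sq_sqrt (by norm_num)
  have h3p : 0 < √(3 : ℝ) := by positivity
  refine ⟨?_, ?_, ?_, ?_, ?_, ?_, ⟨aux_bar, ?_⟩, ⟨?_, ?_⟩, ?_⟩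
  · intro x; simp [fEx18]
  · intro x
    have : 1 ≤ √(x ^ 2 + 1) := Real.one_le_sqrt.2 (by nlinarith [sq_nonneg x])
    unfold fEx18; linarith
  · unfold fEx18
    apply ContDiff.sub _ contDiff_const
    apply ContDiff.sqrt (by fun_prop)
    intro x; positivity
  · exact aux_mono.strictConvexOn_univ_of_deriv
      (continuous_iff_continuousAt.2 fun x => (aux_deriv x).continuousAt)
  · rw [aux_deriv_eq]
    have h := (Real.continuous_sin.tendsto (π / 2)).comp
      (Real.tendsto_arctan_atTop.mono_right nhdsWithin_le_nhds)
    rw [Real.sin_pi_div_two] at h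
    exact h
  · have h2 : Tendsto (fun x : ℝ => 2 * x) atTop atTop :=
      tendsto_id.const_mul_atTop two_pos
    have h := ((aux_lim.comp h2).sub (aux_lim.const_mul 2)).add_const (1 / 2 : ℝ)
    simp only [mul_zero, sub_zero, zero_add] at h
    refine h.congr fun x => ?_
    simp only [Function.comp, fEx18]
    ring
  · intro V hV
    exact aux_mono.injective (hV.trans aux_bar.symm)
  · unfold fEx18
    rw [aux_sqrt3]
    norm_num
    field_simp
    nlinarith
  · nlinarith
  · intro Vt hVt
    constructor
    · refine ⟨1 / 10, by norm_num, 100, by norm_num, ?_⟩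
      unfold mu fEx18
      generalize Vt (1 / 10) 100 = x
      have a1 := aux_half x
      have a2 := aux_half (x + 1 / 10)
      have a3 := aux_lower (x + 1 / 10 + 100)
      have a4 := aux_upper ((1 / 10 + 100) / 2) (by norm_num)
      have a5 : √((1 / 10 / 2) ^ 2 + 1) ≤ (1.002 : ℝ) := by
        apply Real.sqrt_le_iff.2; norm_num
      have a6 : (1.73 : ℝ) ≤ √3 := by apply Real.le_sqrt_of_sq_le; norm_num
      norm_num at a1 a2 a3 a4 a5 a6 ⊢
      linarith
    · refine ⟨3, ?_⟩
      rintro V₁ ⟨h1, V₂, h12, hmu⟩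
      by_contra! hlt
      have hE := hVt V₁ V₂ h1 (by linarith)
      unfold mu at hmu
      generalize Vt V₁ V₂ = x at hE hmu
      have t1 := aux_tangent x (-V₁)
      have t2 := aux_tangent (x + V₁) 0
      have t3 := aux_tangent (x + V₁ + V₂) V₂
      have hs : deriv fEx18 x * (-V₁ - x) + deriv fEx18 (x + V₁) * (0 - (x + V₁))
          + deriv fEx18 (x + V₁ + V₂) * (V₂ - (x + V₁ + V₂)) = 0 := by
        linear_combination (-V₁ - x) * hE
      have hsum : fEx18 x + fEx18 (x + V₁) + fEx18 (x + V₁ + V₂)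
          ≤ fEx18 (-V₁) + fEx18 0 + fEx18 V₂ := by linarith
      have e1 : fEx18 (-V₁) = fEx18 V₁ := by simp [fEx18]
      have e0 : fEx18 0 = 1 / 2 := by norm_num [fEx18]
      rw [e1, e0] at hsum
      have b1 := aux_upper V₁ h1
      have b2 := aux_upper V₂ (by linarith)
      have b3 := aux_lower (V₁ / 2)
      have b4 := aux_lower ((V₁ + V₂) / 2)
      have c1 : 1 / (2 * V₁) ≤ 1 / 6 := one_div_le_one_div_of_le (by norm_num) (by linarith)
      have c2 : 1 / (2 * V₂) ≤ 1 / 6 := one_div_le_one_div_of_le (by norm_num) (by linarith)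
      have d (y : ℝ) : fEx18 y = √(y ^ 2 + 1) - 1 / 2 := rfl
      have d1 := d V₁
      have d2 := d V₂
      have d3 := d (V₁ / 2)
      have d4 := d ((V₁ + V₂) / 2)
      linarith
end
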